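/- A finite simple connected loopless graph G is resistance nonnegative (RN) if and only if the intersection P(G)° ∩ 2M(G) of the relative interior of the spanning tree polytope with the twice-dilated matching polytope is non-empty. -/

import Mathlib

open scoped Classical

namespace RCurv

variable {V : Type*} [Fintype V] [DecidableEq V]

/-- `T` is (the edge set of) a spanning tree of `G`. -/
def IsSpanningTree (G : SimpleGraph V) (T : Finset (Sym2 V)) : Prop :=
  (T : Set (Sym2 V)) ⊆ G.edgeSet ∧ (SimpleGraph.fromEdgeSet (T : Set (Sym2 V))).IsTree

/-- The finite set of all spanning trees of `G`. -/
noncomputable def spanningTrees (G : SimpleGraph V) : Finset (Finset (Sym2 V)) :=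
  Finset.univ.filter fun T => IsSpanningTree G T

/-- The relative resistance `r_e(c)` of an edge `e`. -/
noncomputable def relRes (G : SimpleGraph V) (c : Sym2 V → ℝ) (e : Sym2 V) : ℝ :=
  (∑ T ∈ (spanningTrees G).filter (fun T => e ∈ T), ∏ t ∈ T, c t) /
    (∑ T ∈ spanningTrees G, ∏ t ∈ T, c t)

/-- The resistance curvature `p_v(c)` of a vertex `v`. -/
noncomputable def curv (G : SimpleGraph V) (c : Sym2 V → ℝ) (v : V) : ℝ :=
  1 - (1 / 2) * ∑ u ∈ G.neighborFinset v, relRes G c s(u, v)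

/-- `G` is resistance nonnegative. -/
def IsRN (G : SimpleGraph V) : Prop :=
  ∃ c : Sym2 V → ℝ, (∀ e ∈ G.edgeSet, 0 < c e) ∧ ∀ v : V, 0 ≤ curv G c v

/-- `G` is resistance positive. -/
def IsRP (G : SimpleGraph V) : Prop :=
  ∃ c : Sym2 V → ℝ, (∀ e ∈ G.edgeSet, 0 < c e) ∧ ∀ v : V, 0 < curv G c v

/-- The indicator vector of a finite edge set, as a vector in `ℝ^{Sym2 V}`. -/
noncomputable def indVec (T : Finset (Sym2 V)) : Sym2 V → ℝ := fun e => if e ∈ T then 1 else 0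

/-- The spanning tree polytope `P(G)`. -/
noncomputable def stPolytope (G : SimpleGraph V) : Set (Sym2 V → ℝ) :=
  convexHull ℝ {x | ∃ T ∈ spanningTrees G, x = indVec T}

/-- `M` is a matching of `G`. -/
def IsMatching' (G : SimpleGraph V) (M : Finset (Sym2 V)) : Prop :=
  (M : Set (Sym2 V)) ⊆ G.edgeSet ∧ ∀ v : V, (M.filter fun e => v ∈ e).card ≤ 1

/-- The matching polytope `M(G)`. -/
noncomputable def matchingPolytope (G : SimpleGraph V) : Set (Sym2 V → ℝ) :=
  convexHull ℝ {x | ∃ M : Finset (Sym2 V), IsMatching' G M ∧ x = indVec M}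

/-- A Hamiltonian path: a spanning tree in which every vertex has degree at most `2`. -/
def IsHamPath (G : SimpleGraph V) (H : Finset (Sym2 V)) : Prop :=
  IsSpanningTree G H ∧ ∀ v : V, (H.filter fun e => v ∈ e).card ≤ 2

end RCurv

/-!
Write `a_T` for the indicator vector of a spanning tree `T`. The vector `(r_e(c))_e` is the mean of
the `a_T` for the probability weights proportional to `∏ t ∈ T, c t`. With `c t = exp (θ t)` these
weights are `exp ⟪a_T, θ⟫`: they form an exponential family, and by Birch's theorem its means are
exactly the convex combinations of the `a_T` with positive coefficients, that is, the points of
`P(G)°`. The theorem therefore reduces to describing which `x ∈ P(G)` lie in `2 M(G)`.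

The curvature at `v` is nonnegative iff the edges at `v` have total resistance at most `2`, which is
the degree inequality of `2 M(G)` at `v`. By Edmonds' theorem `2 M(G)` is cut out in addition by
`x ≥ 0` and `x(E[U]) ≤ |U| - 1` for odd `U`, and these hold throughout `P(G)` since a forest has
at most `|U| - 1` edges inside `U`.

For Edmonds' theorem, suppose that `x` satisfies the inequalities but lies outside `M(G)`, and
choose minimal nonnegative weights `w` separating `x` from all matchings. Lowering `w` on an edge
set `A` destroys the separation, so some maximum-weight matching `M` has `|M ∩ A| < x(A)`. Taking
the star of `t` for `A`, every vertex `t` is missed by a maximum-weight matching; by Gallai's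
lemma a maximum-weight matching then misses at most one vertex of each component `K` of the support
of `w`. Hence `|K|` is odd and `|M ∩ E[K]| = (|K| - 1) / 2` for all of them, which contradicts
`|M ∩ E[K]| < x(E[K])` for a suitable `M`.
-/

namespace RCurv

open Finset Matrix

section IntrinsicInterior

variable {ι E : Type*} [NormedAddCommGroup E] [NormedSpace ℝ E] {s : Set E} {x y : E}

lemma exists_mem_openSegment_of_mem_intrinsicInterior
    (hx : x ∈ intrinsicInterior ℝ s) (hy : y ∈ s) : ∃ z ∈ s, x ∈ openSegment ℝ y z := by
  obtain ⟨x, hxint, rfl⟩ := mem_intrinsicInterior.1 hx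
  have : Nonempty (affineSpan ℝ s) := ⟨x⟩
  have hstretch := eventually_homothety_mem_of_mem_interior ℝ
    (⟨y, subset_affineSpan ℝ s hy⟩ : affineSpan ℝ s) hxint
  obtain ⟨t, ht, ht1 : 1 < t⟩ := ((hstretch.filter_mono nhdsWithin_le_nhds).and
    (self_mem_nhdsWithin (s := Set.Ioi (1 : ℝ)))).exists
  refine ⟨_, ht, ?_⟩
  rw [openSegment_eq_image_lineMap]
  refine ⟨t⁻¹, ⟨by positivity, inv_lt_one_of_one_lt₀ ht1⟩, ?_⟩
  simp [AffineMap.homothety_apply, AffineMap.lineMap_apply, smul_smul, (one_pos.trans ht1).ne']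

lemma openSegment_subset_intrinsicInterior (hs : Convex ℝ s) (hx : x ∈ intrinsicInterior ℝ s)
    (hy : y ∈ s) : openSegment ℝ y x ⊆ intrinsicInterior ℝ s := by
  obtain ⟨x, hxint, rfl⟩ := mem_intrinsicInterior.1 hx
  have : Nonempty (affineSpan ℝ s) := ⟨x⟩
  let y' : affineSpan ℝ s := ⟨y, subset_affineSpan ℝ s hy⟩
  rw [openSegment_eq_image_lineMap]
  rintro _ ⟨t, ⟨ht0, ht1⟩, rfl⟩
  refine ⟨AffineMap.homothety y' t x, ?_, rfl⟩
  have hmaps : AffineMap.homothety y' t '' ((↑) ⁻¹' s) ⊆ ((↑) ⁻¹' s : Set (affineSpan ℝ s)) := by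
    rintro _ ⟨z, hz, rfl⟩
    exact hs.lineMap_mem hy hz ⟨ht0.le, ht1.le⟩
  exact interior_mono hmaps ((AffineMap.homothety_isOpenMap y' t ht0.ne').image_interior_subset _
    (Set.mem_image_of_mem _ hxint))

variable [Fintype ι]

lemma exists_mem_openSegment_stdSimplex {v w : ι → ℝ} (hw : ∀ i, 0 < w i) (hw1 : ∑ i, w i = 1)
    (hv : v ∈ stdSimplex ℝ ι) : ∃ u ∈ stdSimplex ℝ ι, w ∈ openSegment ℝ u v := by
  have hsmall : ∀ᶠ t in nhdsWithin (0 : ℝ) (Set.Ioi 0),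
      ∀ i, 0 < AffineMap.lineMap (w i) (v i) (-t) := by
    refine Filter.Eventually.filter_mono nhdsWithin_le_nhds (Filter.eventually_all.2 fun i => ?_)
    have : Continuous fun t : ℝ => AffineMap.lineMap (w i) (v i) (-t) :=
      AffineMap.lineMap_continuous.comp continuous_neg
    exact this.continuousAt.eventually (lt_mem_nhds (by simpa using hw i))
  obtain ⟨t, ht, ht0 : 0 < t⟩ := (hsmall.and self_mem_nhdsWithin).exists
  refine ⟨AffineMap.lineMap w v (-t), ⟨fun i => by simpa [AffineMap.lineMap_apply] using (ht i).le,
    ?_⟩, (1 + t)⁻¹, t * (1 + t)⁻¹, by positivity, by positivity, by field_simp, ?_⟩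
  · simp [AffineMap.lineMap_apply, sum_add_distrib, ← mul_sum, hw1, hv.2]
  · ext i
    simp only [AffineMap.lineMap_apply, vsub_eq_sub, vadd_eq_add, Pi.add_apply, Pi.smul_apply,
      Pi.sub_apply, smul_eq_mul]
    field_simp
    ring

lemma convexHull_range_eq_image_stdSimplex (a : ι → E) :
    convexHull ℝ (Set.range a) = Fintype.linearCombination ℝ a '' stdSimplex ℝ ι := by
  rw [← convexHull_rangle_single_eq_stdSimplex, LinearMap.image_convexHull, ← Set.range_comp]
  congr! 2
  ext i
  simp

theorem intrinsicInterior_convexHull_range [FiniteDimensional ℝ E] (a : ι → E) :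
    intrinsicInterior ℝ (convexHull ℝ (Set.range a)) =
      Fintype.linearCombination ℝ a '' {w | (∀ i, 0 < w i) ∧ ∑ i, w i = 1} := by
  let f := Fintype.linearCombination ℝ a
  have hhull := convexHull_range_eq_image_stdSimplex a
  have himage (u v : ι → ℝ) : f '' openSegment ℝ u v = openSegment ℝ (f u) (f v) :=
    image_openSegment ℝ f.toAffineMap u v
  apply Set.Subset.antisymm
  · intro x hx
    have : Nonempty ι :=
      Set.range_nonempty_iff_nonempty.1 (convexHull_nonempty_iff.1 ⟨x, intrinsicInterior_subset hx⟩)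
    obtain ⟨v, ⟨hv0, hv1⟩, hv⟩ : ∃ v ∈ stdSimplex ℝ ι, ∀ i, 0 < v i :=
      ⟨_, stdSimplex.barycenter.2, fun i => by rw [stdSimplex.barycenter_apply]; positivity⟩
    have hfv : f v ∈ convexHull ℝ (Set.range a) := hhull ▸ Set.mem_image_of_mem f ⟨hv0, hv1⟩
    obtain ⟨z, hz, hxz⟩ := exists_mem_openSegment_of_mem_intrinsicInterior hx hfv
    obtain ⟨u, ⟨hu, hu1⟩, rfl⟩ := hhull ▸ hz
    obtain ⟨_, ⟨s, t, hs, ht, hst, rfl⟩, rfl⟩ := himage v u ▸ hxz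
    refine ⟨_, ⟨fun i => ?_, ?_⟩, rfl⟩
    · exact add_pos_of_pos_of_nonneg (mul_pos hs (hv i)) (mul_nonneg ht.le (hu i))
    · simp [sum_add_distrib, ← mul_sum, hv1, hu1, hst]
  · rintro _ ⟨w, ⟨hw, hw1⟩, rfl⟩
    have hmem : f w ∈ convexHull ℝ (Set.range a) :=
      hhull ▸ Set.mem_image_of_mem f ⟨fun i => (hw i).le, hw1⟩
    obtain ⟨x, hx⟩ := Set.Nonempty.intrinsicInterior (convex_convexHull ℝ _) ⟨_, hmem⟩
    obtain ⟨v, hv, rfl⟩ := hhull ▸ intrinsicInterior_subset hx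
    obtain ⟨u, hu, hwu⟩ := exists_mem_openSegment_stdSimplex hw hw1 hv
    exact openSegment_subset_intrinsicInterior (convex_convexHull ℝ _) hx
      (hhull ▸ Set.mem_image_of_mem f hu) (himage u v ▸ Set.mem_image_of_mem f hwu)

end IntrinsicInterior

section ExponentialFamily

variable {ι : Type*} [Fintype ι] {w : ι → ℝ} {W : Submodule ℝ (ι → ℝ)}

lemma isCompact_sum_exp_le (hw : ∀ i, 0 < w i) (hW : ∀ y ∈ W, w ⬝ᵥ y = 0) (r : ℝ) :
    IsCompact {y | y ∈ W ∧ ∑ i, Real.exp (y i) ≤ r} := by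
  refine (isCompact_univ_pi fun i => isCompact_Icc (a := r - r * (∑ j, w j) / w i)
    (b := r)).of_isClosed_subset ?_ ?_
  · have hcont : Continuous fun y : ι → ℝ => ∑ i, Real.exp (y i) := by fun_prop
    exact W.closed_of_finiteDimensional.inter (isClosed_le hcont continuous_const)
  · rintro y ⟨hyW, hyr⟩ i -
    have hle (j) : y j ≤ r := by
      have := single_le_sum (fun j _ => (Real.exp_pos (y j)).le) (mem_univ j)
      linarith [Real.add_one_le_exp (y j)]
    refine ⟨?_, hle i⟩
    have hsum : ∑ j, w j * (r - y j) = r * ∑ j, w j := by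
      have := hW y hyW
      rw [dotProduct] at this
      simp only [mul_sub, sum_sub_distrib, this, ← sum_mul]
      ring
    have hi : w i * (r - y i) ≤ r * ∑ j, w j := hsum ▸
      single_le_sum (f := fun j => w j * (r - y j))
        (fun j _ => mul_nonneg (hw j).le (sub_nonneg.2 (hle j))) (mem_univ i)
    rw [sub_le_comm, le_div_iff₀ (hw i)]
    linarith

lemma exists_isMinOn_sum_exp (hw : ∀ i, 0 < w i) (hW : ∀ y ∈ W, w ⬝ᵥ y = 0) :
    ∃ y ∈ W, IsMinOn (fun y : ι → ℝ => ∑ i, Real.exp (y i)) W y := by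
  let r : ℝ := ∑ i : ι, Real.exp ((0 : ι → ℝ) i)
  obtain ⟨y, ⟨hyW, hyr⟩, hmin⟩ := (isCompact_sum_exp_le hw hW r).exists_isMinOn
    (f := fun y : ι → ℝ => ∑ i, Real.exp (y i)) ⟨0, W.zero_mem, le_rfl⟩ (by fun_prop)
  refine ⟨y, hyW, fun z hzW => ?_⟩
  rcases le_total (∑ i, Real.exp (z i)) r with hz | hz
  · exact hmin ⟨hzW, hz⟩
  · exact hyr.trans hz

lemma sum_exp_mul_eq_zero_of_isMinOn {y z : ι → ℝ} (hy : y ∈ W) (hz : z ∈ W)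
    (hmin : IsMinOn (fun y : ι → ℝ => ∑ i, Real.exp (y i)) W y) :
    ∑ i, Real.exp (y i) * z i = 0 := by
  have hderiv : HasDerivAt (fun t : ℝ => ∑ i, Real.exp (y i + t * z i))
      (∑ i, Real.exp (y i) * z i) 0 := by
    refine HasDerivAt.fun_sum fun i _ => ?_
    simpa using (((hasDerivAt_id (0 : ℝ)).mul_const (z i)).const_add (y i)).exp
  have hlocal : IsLocalMin (fun t : ℝ => ∑ i, Real.exp (y i + t * z i)) 0 :=
    Filter.Eventually.of_forall fun t => by
      simpa using hmin (W.add_mem hy (W.smul_mem t hz))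
  exact hlocal.hasDerivAt_eq_zero hderiv

theorem exists_sum_exp_dotProduct_smul_eq {κ : Type*} [Fintype κ] (a : ι → κ → ℝ)
    (hw : ∀ i, 0 < w i) (hw1 : ∑ i, w i = 1) :
    ∃ θ : κ → ℝ, ∑ i, Real.exp (a i ⬝ᵥ θ) • a i =
      (∑ i, Real.exp (a i ⬝ᵥ θ)) • ∑ i, w i • a i := by
  let x : κ → ℝ := ∑ i, w i • a i
  let A : Matrix ι κ ℝ := .of fun i => a i - x
  have hA (i) (θ) : (A *ᵥ θ) i = (a i - x) ⬝ᵥ θ := rfl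
  have hwA : w ᵥ* A = 0 := by
    ext k
    simp [A, vecMul, dotProduct, mul_sub, ← sum_mul, hw1, x]
  obtain ⟨_, ⟨θ, rfl⟩, hmin⟩ := exists_isMinOn_sum_exp (W := LinearMap.range A.mulVecLin) hw (by
    rintro _ ⟨θ, rfl⟩
    rw [mulVecLin_apply, dotProduct_mulVec, hwA, zero_dotProduct])
  have hcrit : ∑ i, Real.exp ((A *ᵥ θ) i) • (a i - x) = 0 := by
    refine dotProduct_eq_zero _ fun η => ?_
    simpa [sum_dotProduct, hA] using sum_exp_mul_eq_zero_of_isMinOn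
      (LinearMap.mem_range_self _ θ) (LinearMap.mem_range_self A.mulVecLin η) hmin
  refine ⟨θ, ?_⟩
  have hexp (i) : Real.exp (a i ⬝ᵥ θ) = Real.exp (x ⬝ᵥ θ) * Real.exp ((A *ᵥ θ) i) := by
    rw [← Real.exp_add, hA, sub_dotProduct, add_sub_cancel]
  rw [← sub_eq_zero, sum_smul, ← sum_sub_distrib]
  simp only [← smul_sub, hexp, mul_smul, ← smul_sum]
  rw [show ∑ i, w i • a i = x from rfl, hcrit, smul_zero]

end ExponentialFamily

section AlternatingComponents

lemma card_degree_le_one_le_two {V : Type*} [Fintype V] {F : SimpleGraph V} [DecidableRel F.Adj]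
    (hF : F.Connected) (hdeg : ∀ v, F.degree v ≤ 2) : #{v | F.degree v ≤ 1} ≤ 2 := by
  have hedges : Fintype.card V ≤ #F.edgeFinset + 1 := by
    have h := hF.card_vert_le_card_edgeSet_add_one
    rwa [Nat.card_eq_fintype_card, Nat.card_eq_fintype_card, ← SimpleGraph.edgeFinset_card] at h
  have hsum : ∑ v, (F.degree v + if F.degree v ≤ 1 then 1 else 0) ≤ ∑ _v : V, 2 :=
    sum_le_sum fun v _ => by have := hdeg v; split_ifs <;> lia
  rw [sum_add_distrib, F.sum_degrees_eq_twice_card_edges, ← card_filter, sum_const, card_univ,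
    smul_eq_mul] at hsum
  lia

lemma card_le_two_of_subset_supp_of_degree_le_one {V : Type*} [Fintype V] {F : SimpleGraph V}
    [DecidableRel F.Adj] (hF : ∀ v, F.degree v ≤ 2) (C : F.ConnectedComponent) {s : Finset V}
    (hsC : ∀ v ∈ s, v ∈ C.supp) (hs : ∀ v ∈ s, F.degree v ≤ 1) : #s ≤ 2 := by
  have hdeg (v : C) : C.toSimpleGraph.degree v = F.degree v := by
    convert! F.degree_induce_of_neighborSet_subset (s := C.supp) (v := v)
      fun u hu => C.mem_supp_of_adj_mem_supp v.2 hu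
  calc #s = #(s.subtype (· ∈ C.supp)) := by rw [card_subtype, filter_true_of_mem hsC]
    _ ≤ #{v : C | C.toSimpleGraph.degree v ≤ 1} := card_le_card fun v hv => by
      simpa [hdeg] using hs v (by simpa using hv)
    _ ≤ 2 := card_degree_le_one_le_two C.connected_toSimpleGraph fun v =>
      (hdeg v).trans_le (hF v)

lemma degree_fromEdgeSet_le {V : Type*} [DecidableEq V] (A : Finset (Sym2 V)) (v : V)
    [Fintype ((SimpleGraph.fromEdgeSet (A : Set (Sym2 V))).neighborSet v)] :
    (SimpleGraph.fromEdgeSet (A : Set (Sym2 V))).degree v ≤ #{e ∈ A | v ∈ e} := by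
  refine card_le_card_of_injOn (fun u => s(v, u)) (fun u hu => ?_) fun u _ u' _ h =>
    Sym2.congr_right.1 h
  have := (SimpleGraph.mem_neighborFinset _ _ _).1 hu
  simp_all

end AlternatingComponents

section Matching

variable {V : Type*} {G : SimpleGraph V} {M N : Finset (Sym2 V)} {C : Finset V} {e f : Sym2 V}
  {v : V}

/-- The edge set `M` leaves the vertex `v` uncovered. -/
def Misses (M : Finset (Sym2 V)) (v : V) : Prop := ∀ e ∈ M, v ∉ e

/-- No edge of `A` joins `C` to its complement: `C` is a union of connected components of the
graph with edge set `A`. -/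
def NoEdgeLeaves (A : Finset (Sym2 V)) (C : Finset V) : Prop :=
  ∀ e ∈ A, ∀ v ∈ e, v ∈ C → e ∈ C.sym2

lemma noEdgeLeaves_supp {F : SimpleGraph V} (hM : (M : Set (Sym2 V)) ⊆ F.edgeSet)
    (K : F.ConnectedComponent) [Fintype K.supp] : NoEdgeLeaves M K.supp.toFinset := by
  intro e he v hve hvK
  obtain ⟨u, rfl⟩ := hve
  rw [Set.mem_toFinset] at hvK
  exact mk_mem_sym2_iff.2 ⟨Set.mem_toFinset.2 hvK,
    Set.mem_toFinset.2 (K.mem_supp_of_adj_mem_supp hvK (hM he))⟩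

variable [DecidableEq V]

/-- The edge set obtained from `M` by replacing its edges inside `C` with those of `N`; for
matchings and `C` a component of their union, this is the usual exchange along an alternating
path. -/
def swapOn (C : Finset V) (M N : Finset (Sym2 V)) : Finset (Sym2 V) :=
  M \ C.sym2 ∪ N ∩ C.sym2

lemma IsMatching'.eq_of_mem (hM : IsMatching' G M) (he : e ∈ M) (hf : f ∈ M) (hve : v ∈ e)
    (hvf : v ∈ f) : e = f :=
  card_le_one.1 (hM.2 v) e (by simp [he, hve]) f (by simp [hf, hvf])

lemma Misses.card_filter_mem_eq_zero (hv : Misses M v) : #{e ∈ M | v ∈ e} = 0 := by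
  simpa [Misses, filter_eq_empty_iff] using hv

lemma IsMatching'.card_filter_mem [Decidable (Misses M v)] (hM : IsMatching' G M) :
    #{e ∈ M | v ∈ e} = if Misses M v then 0 else 1 := by
  split_ifs with hv
  · exact hv.card_filter_mem_eq_zero
  · refine le_antisymm (hM.2 v) (card_pos.2 ?_)
    simpa [Misses, Finset.Nonempty] using hv

lemma IsMatching'.insert {u v : V} (hM : IsMatching' G M) (huv : G.Adj u v) (hu : Misses M u)
    (hv : Misses M v) : IsMatching' G (insert s(u, v) M) := by
  refine ⟨by simpa [Set.insert_subset_iff] using ⟨huv, hM.1⟩, fun x => ?_⟩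
  rw [filter_insert]
  split_ifs with hx
  · have : Misses M x := by rcases Sym2.mem_iff.1 hx with rfl | rfl <;> assumption
    rw [filter_eq_empty_iff.2 fun e he => this e he, insert_empty, card_singleton]
  · exact hM.2 x

lemma mem_of_mem_swapOn (hC : NoEdgeLeaves M C) (he : e ∈ swapOn C M N) (hve : v ∈ e) :
    e ∈ if v ∈ C then N else M := by
  rw [swapOn, mem_union, mem_sdiff, mem_inter] at he
  rcases he with ⟨heM, heC⟩ | ⟨heN, heC⟩
  · rwa [if_neg fun hv => heC (hC e heM v hve hv)]
  · rwa [if_pos (mem_sym2_iff.1 heC v hve)]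

lemma Misses.swapOn_of_mem (hv : Misses N v) (hC : NoEdgeLeaves M C) (hvC : v ∈ C) :
    Misses (swapOn C M N) v := fun e he hve =>
  hv e (by simpa [hvC] using mem_of_mem_swapOn hC he hve) hve

lemma Misses.swapOn_of_notMem (hv : Misses M v) (hC : NoEdgeLeaves M C) (hvC : v ∉ C) :
    Misses (swapOn C M N) v := fun e he hve =>
  hv e (by simpa [hvC] using mem_of_mem_swapOn hC he hve) hve

lemma IsMatching'.swapOn (hM : IsMatching' G M) (hN : IsMatching' G N) (hC : NoEdgeLeaves M C) :
    IsMatching' G (swapOn C M N) := by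
  constructor
  · intro e he
    rcases mem_union.1 he with he | he
    · exact hM.1 (mem_sdiff.1 he).1
    · exact hN.1 (mem_inter.1 he).1
  · intro v
    refine card_le_one.2 fun e he f hf => ?_
    rw [mem_filter] at he hf
    have heMN := mem_of_mem_swapOn hC he.1 he.2
    have hfMN := mem_of_mem_swapOn hC hf.1 hf.2
    split_ifs at heMN hfMN
    exacts [hN.eq_of_mem heMN hfMN he.2 hf.2, hM.eq_of_mem heMN hfMN he.2 hf.2]

lemma card_misses_add_two_mul_card (hM : IsMatching' G M) (hC : NoEdgeLeaves M C) :
    #{v ∈ C | Misses M v} + 2 * #(M ∩ C.sym2) = #C := by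
  have hcover : ∀ v ∈ C, #{e ∈ M ∩ C.sym2 | v ∈ e} = if ¬Misses M v then 1 else 0 := by
    intro v hv
    rw [ite_not, ← hM.card_filter_mem]
    congr 1
    ext e
    simpa [and_right_comm] using fun he hve => hC e he v hve hv
  have hends : ∀ e ∈ M ∩ C.sym2, #{v ∈ C | v ∈ e} = 2 := by
    intro e he
    rw [mem_inter] at he
    rw [← Sym2.card_toFinset_of_not_isDiag e (G.not_isDiag_of_mem_edgeSet (hM.1 he.1))]
    congr 1
    ext v
    simpa using fun hve => mem_sym2_iff.1 he.2 v hve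
  have hcount := sum_card_bipartiteAbove_eq_sum_card_bipartiteBelow (s := C) (t := M ∩ C.sym2)
    fun v e => v ∈ e
  simp only [bipartiteAbove, bipartiteBelow] at hcount
  rw [sum_congr rfl hcover, sum_congr rfl hends, ← card_filter, sum_const, smul_eq_mul] at hcount
  rw [← card_filter_add_card_filter_not (s := C) (Misses M), hcount, mul_comm]

lemma indVec_swapOn_add (C : Finset V) (M N : Finset (Sym2 V)) :
    indVec (swapOn C M N) + indVec (swapOn C N M) = indVec M + indVec N := by
  ext e
  by_cases he : e ∈ C.sym2 <;> simp [indVec, swapOn, he, add_comm]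

lemma indVec_insert (he : e ∉ M) : indVec (insert e M) = Pi.single e 1 + indVec M := by
  ext f
  by_cases hf : f = e
  · simp [indVec, hf, he]
  · simp [indVec, hf]

variable [Finite V]

lemma notMem_supp_of_misses (hM : IsMatching' G M) (hN : IsMatching' G N) {t u v : V}
    (htu : t ≠ u) (htv : t ≠ v) (huv : u ≠ v) (ht : Misses N t) (hu : Misses M u) (hv : Misses M v)
    {K : (SimpleGraph.fromEdgeSet (M ∪ N : Finset (Sym2 V)) : SimpleGraph V).ConnectedComponent}
    (htK : t ∈ K.supp) (huK : u ∈ K.supp) : v ∉ K.supp := by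
  intro hvK
  have := Fintype.ofFinite V
  have hdeg (x : V) := (degree_fromEdgeSet_le (M ∪ N) x).trans
    ((congrArg card (filter_union _ M N)).trans_le (card_union_le _ _))
  have hle : #{t, u, v} ≤ 2 := by
    refine card_le_two_of_subset_supp_of_degree_le_one
      (fun x => (hdeg x).trans (add_le_add (hM.2 x) (hN.2 x))) K (by simpa using ⟨htK, huK, hvK⟩)
      fun x hx => ?_
    refine (hdeg x).trans ?_
    simp only [mem_insert, mem_singleton] at hx
    rcases hx with rfl | rfl | rfl
    · simpa [ht.card_filter_mem_eq_zero] using hM.2 x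
    · simpa [hu.card_filter_mem_eq_zero] using hN.2 x
    · simpa [hv.card_filter_mem_eq_zero] using hN.2 x
  rw [card_eq_three.2 ⟨t, u, v, htu, htv, huv, rfl⟩] at hle
  lia

lemma exists_noEdgeLeaves_separating (hM : IsMatching' G M) (hN : IsMatching' G N) {t u v : V}
    (htu : t ≠ u) (htv : t ≠ v) (huv : u ≠ v) (ht : Misses N t) (hu : Misses M u)
    (hv : Misses M v) :
    ∃ C : Finset V, NoEdgeLeaves M C ∧ NoEdgeLeaves N C ∧ t ∈ C ∧ (u ∉ C ∨ v ∉ C) := by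
  have := Fintype.ofFinite V
  have hedges {L : Finset (Sym2 V)} (hL : IsMatching' G L) (hLMN : L ⊆ M ∪ N) :
      (L : Set (Sym2 V)) ⊆
        (SimpleGraph.fromEdgeSet (M ∪ N : Finset (Sym2 V)) : SimpleGraph V).edgeSet := by
    intro e he
    rw [SimpleGraph.edgeSet_fromEdgeSet]
    exact ⟨hLMN he, G.not_isDiag_of_mem_edgeSet (hL.1 he)⟩
  let K := SimpleGraph.connectedComponentMk (.fromEdgeSet (M ∪ N : Finset (Sym2 V))) t
  refine ⟨K.supp.toFinset, noEdgeLeaves_supp (hedges hM subset_union_left) K,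
    noEdgeLeaves_supp (hedges hN subset_union_right) K, by simp [K], ?_⟩
  rw [Set.mem_toFinset, Set.mem_toFinset, ← not_and_or]
  exact fun ⟨huK, hvK⟩ => notMem_supp_of_misses hM hN htu htv huv ht hu hv rfl huK hvK

end Matching

section MaxWeightMatching

variable {V : Type*} [Fintype V] [DecidableEq V] {H : SimpleGraph V} {w : Sym2 V → ℝ}
  {M N : Finset (Sym2 V)} {u v : V}

/-- `M` has the largest weight among all matchings of `H`, for the edge weights `w`. -/
structure IsMaxWeightMatching (H : SimpleGraph V) (w : Sym2 V → ℝ) (M : Finset (Sym2 V)) :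
    Prop where
  isMatching : IsMatching' H M
  dotProduct_le : ∀ N, IsMatching' H N → w ⬝ᵥ indVec N ≤ w ⬝ᵥ indVec M

namespace IsMaxWeightMatching

lemma swapOn {C : Finset V} (hM : IsMaxWeightMatching H w M) (hN : IsMaxWeightMatching H w N)
    (hMC : NoEdgeLeaves M C) (hNC : NoEdgeLeaves N C) :
    IsMaxWeightMatching H w (swapOn C M N) := by
  refine ⟨hM.isMatching.swapOn hN.isMatching hMC, fun L hL => ?_⟩
  have hsum := congrArg (w ⬝ᵥ ·) (indVec_swapOn_add C M N)
  simp only [dotProduct_add] at hsum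
  have hLM := hM.dotProduct_le L hL
  have hswap := hN.dotProduct_le _ (hN.isMatching.swapOn hM.isMatching hNC)
  linarith

lemma exists_misses {t : V} (hM : IsMaxWeightMatching H w M) (hN : IsMaxWeightMatching H w N)
    (ht : Misses N t) (hu : Misses M u) (hv : Misses M v) (huv : u ≠ v) :
    ∃ L, IsMaxWeightMatching H w L ∧ Misses L t ∧ (Misses L u ∨ Misses L v) := by
  rcases eq_or_ne t u with rfl | htu
  · exact ⟨M, hM, hu, .inl hu⟩
  rcases eq_or_ne t v with rfl | htv
  · exact ⟨M, hM, hv, .inr hv⟩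
  obtain ⟨C, hMC, hNC, htC, hC⟩ :=
    exists_noEdgeLeaves_separating hM.isMatching hN.isMatching htu htv huv ht hu hv
  exact ⟨_, hM.swapOn hN hMC hNC, ht.swapOn_of_mem hMC htC,
    hC.imp (hu.swapOn_of_notMem hMC) (hv.swapOn_of_notMem hMC)⟩

lemma not_adj_of_misses (hM : IsMaxWeightMatching H w M) (hw : ∀ e ∈ H.edgeSet, 0 < w e)
    (hu : Misses M u) (hv : Misses M v) : ¬H.Adj u v := by
  intro huv
  have hle := hM.dotProduct_le _ (hM.isMatching.insert huv hu hv)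
  rw [indVec_insert fun he => hu _ he (Sym2.mem_mk_left u v), dotProduct_add,
    dotProduct_single_one] at hle
  linarith [hw s(u, v) huv]

lemma eq_of_reachable_of_misses (hM : IsMaxWeightMatching H w M)
    (hw : ∀ e ∈ H.edgeSet, 0 < w e) (hmiss : ∀ t, ∃ N, IsMaxWeightMatching H w N ∧ Misses N t)
    (huv : H.Reachable u v) (hu : Misses M u) (hv : Misses M v) : u = v := by
  obtain ⟨p⟩ := huv
  induction p generalizing M with
  | nil => rfl
  | @cons u t v hut p ih =>
    by_contra huv
    obtain ⟨N, hN, htN⟩ := hmiss t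
    obtain ⟨L, hL, htL, huL | hvL⟩ := hM.exists_misses hN htN hu hv huv
    · exact hL.not_adj_of_misses hw huL htL hut
    · obtain rfl := ih hL htL hvL
      exact hM.not_adj_of_misses hw hu hv hut

lemma card_supp_le (hM : IsMaxWeightMatching H w M) (hw : ∀ e ∈ H.edgeSet, 0 < w e)
    (hmiss : ∀ t, ∃ N, IsMaxWeightMatching H w N ∧ Misses N t) (K : H.ConnectedComponent) :
    #K.supp.toFinset ≤ 2 * #(M ∩ K.supp.toFinset.sym2) + 1 := by
  have hcount := card_misses_add_two_mul_card hM.isMatching (noEdgeLeaves_supp hM.isMatching.1 K)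
  have hone : #{v ∈ K.supp.toFinset | Misses M v} ≤ 1 := by
    refine card_le_one.2 fun u hu v hv => ?_
    rw [mem_filter, Set.mem_toFinset] at hu hv
    exact hM.eq_of_reachable_of_misses hw hmiss (K.reachable_of_mem_supp hu.1 hv.1) hu.2 hv.2
  lia

lemma odd_card_supp (hw : ∀ e ∈ H.edgeSet, 0 < w e)
    (hmiss : ∀ t, ∃ N, IsMaxWeightMatching H w N ∧ Misses N t) (K : H.ConnectedComponent) :
    Odd #K.supp.toFinset := by
  obtain ⟨t, ht⟩ := K.nonempty_supp
  obtain ⟨M, hM, htM⟩ := hmiss t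
  have hcount := card_misses_add_two_mul_card hM.isMatching (noEdgeLeaves_supp hM.isMatching.1 K)
  have hpos : 0 < #{v ∈ K.supp.toFinset | Misses M v} :=
    card_pos.2 ⟨t, mem_filter.2 ⟨Set.mem_toFinset.2 ht, htM⟩⟩
  have hle := hM.card_supp_le hw hmiss K
  exact ⟨#(M ∩ K.supp.toFinset.sym2), by lia⟩

end IsMaxWeightMatching

end MaxWeightMatching

lemma exists_minimal_of_isClosed_of_bddBelow {ι : Type*} [Finite ι] {S : Set (ι → ℝ)}
    (hS : IsClosed S) (hne : S.Nonempty) (hbdd : BddBelow S) : ∃ w, Minimal (· ∈ S) w := by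
  have := Fintype.ofFinite ι
  obtain ⟨w₀, hw₀⟩ := hne
  obtain ⟨b, hb⟩ := hbdd
  have hcompact : IsCompact (S ∩ Set.Icc b w₀) := isCompact_Icc.inter_left hS
  obtain ⟨w, ⟨hwS, -, hww₀⟩, hmin⟩ := hcompact.exists_isMinOn
    (f := fun w : ι → ℝ => ∑ i, w i) ⟨w₀, hw₀, hb hw₀, le_rfl⟩ (by fun_prop)
  refine ⟨w, hwS, fun v hvS hvw => ?_⟩
  by_contra hwv
  exact (Fintype.sum_strictMono (lt_of_le_not_ge hvw hwv)).not_ge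
    (hmin ⟨hvS, hb hvS, hvw.trans hww₀⟩)

section Edmonds

variable {V : Type*} {G : SimpleGraph V} {x w : Sym2 V → ℝ}

/-- The subgraph of `G` formed by the edges of positive weight. -/
def positivePart (G : SimpleGraph V) (w : Sym2 V → ℝ) : SimpleGraph V :=
  G.deleteEdges {e | w e ≤ 0}

lemma mem_edgeSet_positivePart {e : Sym2 V} :
    e ∈ (positivePart G w).edgeSet ↔ e ∈ G.edgeSet ∧ 0 < w e := by
  simp [positivePart]

variable [DecidableEq V]

lemma IsMatching'.subset {M N : Finset (Sym2 V)} (hM : IsMatching' G M) (hNM : N ⊆ M) :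
    IsMatching' G N :=
  ⟨(coe_subset.2 hNM).trans hM.1,
    fun v => (card_le_card (filter_subset_filter _ hNM)).trans (hM.2 v)⟩

variable [Fintype V]

lemma dotProduct_indVec (w : Sym2 V → ℝ) (A : Finset (Sym2 V)) :
    w ⬝ᵥ indVec A = ∑ e ∈ A, w e := by
  simp [dotProduct, indVec]

lemma posPart_dotProduct_indVec (w : Sym2 V → ℝ) (A : Finset (Sym2 V)) :
    w⁺ ⬝ᵥ indVec A = w ⬝ᵥ indVec (A.filter (0 < w ·)) := by
  rw [dotProduct_indVec, dotProduct_indVec, sum_filter]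
  refine sum_congr rfl fun e _ => ?_
  rw [Pi.posPart_apply]
  split_ifs with he
  · exact posPart_of_nonneg he.le
  · exact posPart_of_nonpos (not_lt.1 he)

/-- The nonnegative edge weights that separate `x` from the matchings of `G` with a gap of `1`;
they witness that `x` lies outside the matching polytope. -/
def separatingWeights (G : SimpleGraph V) (x : Sym2 V → ℝ) : Set (Sym2 V → ℝ) :=
  {w | 0 ≤ w ∧ ∀ M, IsMatching' G M → w ⬝ᵥ indVec M + 1 ≤ w ⬝ᵥ x}

lemma isClosed_separatingWeights : IsClosed (separatingWeights G x) := by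
  simp only [separatingWeights, Set.ofPred_and, Set.ofPred_forall]
  refine isClosed_Ici.inter (isClosed_iInter fun M => isClosed_iInter fun _ =>
    isClosed_le ?_ ?_) <;> fun_prop

lemma separatingWeights_nonempty (hx0 : 0 ≤ x) (hx : x ∉ matchingPolytope G) :
    (separatingWeights G x).Nonempty := by
  have hfinite : {y | ∃ M, IsMatching' G M ∧ y = indVec M}.Finite :=
    (Set.finite_range (indVec (V := V))).subset fun _ ⟨M, _, hM⟩ => ⟨M, hM.symm⟩
  obtain ⟨f, r, hf, hfx⟩ := geometric_hahn_banach_closed_point (convex_convexHull ℝ _)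
    (hfinite.isClosed_convexHull ℝ) hx
  obtain ⟨w, hw⟩ := (dotProductEquiv ℝ (Sym2 V)).surjective f.toLinearMap
  have hfw (y) : f y = w ⬝ᵥ y := (LinearMap.congr_fun hw y).symm
  have hgap : 0 < w ⬝ᵥ x - r := by rw [← hfw]; linarith
  refine ⟨(w ⬝ᵥ x - r)⁻¹ • w⁺, smul_nonneg (by positivity) (posPart_nonneg w), fun M hM => ?_⟩
  have hM := hf _ (subset_convexHull ℝ _ ⟨_, hM.subset (filter_subset (0 < w ·) M), rfl⟩)
  have hle : w ⬝ᵥ x ≤ w⁺ ⬝ᵥ x := dotProduct_le_dotProduct_of_nonneg_right (le_posPart w) hx0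
  rw [hfw, ← posPart_dotProduct_indVec] at hM
  rw [smul_dotProduct, smul_dotProduct, smul_eq_mul, smul_eq_mul, ← inv_mul_cancel₀ hgap.ne',
    ← mul_add]
  gcongr
  linarith

lemma exists_minimal_separatingWeights (hx0 : 0 ≤ x) (hx : x ∉ matchingPolytope G) :
    ∃ w, Minimal (· ∈ separatingWeights G x) w :=
  exists_minimal_of_isClosed_of_bddBelow isClosed_separatingWeights
    (separatingWeights_nonempty hx0 hx) ⟨0, fun _ hw => hw.1⟩

lemma eventually_nonneg_add_mul {a b : ℝ} (ha : 0 ≤ a) (hab : a = 0 → 0 ≤ b) :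
    ∀ᶠ ε in nhdsWithin (0 : ℝ) (Set.Ioi 0), 0 ≤ a + ε * b := by
  rcases ha.eq_or_lt with rfl | ha
  · filter_upwards [self_mem_nhdsWithin] with ε (hε : 0 < ε)
    simpa using mul_nonneg hε.le (hab rfl)
  · have hcont : Continuous fun ε : ℝ => a + ε * b := by fun_prop
    exact ((hcont.tendsto' 0 a (by simp)).eventually (lt_mem_nhds ha)).filter_mono
      nhdsWithin_le_nhds |>.mono fun _ => le_of_lt

lemma exists_tight_matching_of_minimal (hw : Minimal (· ∈ separatingWeights G x) w)
    {A : Finset (Sym2 V)} (hA : A.Nonempty) (hwA : ∀ e ∈ A, 0 < w e) :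
    ∃ M, IsMatching' G M ∧ w ⬝ᵥ indVec M + 1 = w ⬝ᵥ x ∧ indVec A ⬝ᵥ indVec M < indVec A ⬝ᵥ x := by
  by_contra! hno
  have hnonneg : ∀ᶠ ε in nhdsWithin (0 : ℝ) (Set.Ioi 0), ∀ e, 0 ≤ w e + ε * -indVec A e :=
    Filter.eventually_all.2 fun e => eventually_nonneg_add_mul (hw.prop.1 e) fun hwe => by
      have heA : e ∉ A := fun he => (hwA e he).ne' hwe
      simp [indVec, heA]
  have hgap : ∀ᶠ ε in nhdsWithin (0 : ℝ) (Set.Ioi 0), ∀ M, IsMatching' G M →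
      0 ≤ w ⬝ᵥ x - (w ⬝ᵥ indVec M + 1) + ε * (indVec A ⬝ᵥ indVec M - indVec A ⬝ᵥ x) :=
    Filter.eventually_all.2 fun M => Filter.eventually_imp_distrib_left.2 fun hM =>
      eventually_nonneg_add_mul (sub_nonneg.2 (hw.prop.2 M hM)) fun htight =>
        sub_nonneg.2 (hno M hM (sub_eq_zero.1 htight).symm)
  obtain ⟨ε, ⟨hεe, hεM⟩, hε : 0 < ε⟩ :=
    ((hnonneg.and hgap).and self_mem_nhdsWithin).exists
  have hmem : w - ε • indVec A ∈ separatingWeights G x := by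
    refine ⟨fun e => by simpa [← sub_eq_add_neg] using hεe e, fun M hM => ?_⟩
    simp only [sub_dotProduct, smul_dotProduct, smul_eq_mul]
    linarith [hεM M hM]
  have hindVec : 0 ≤ indVec A := fun e => by simp only [indVec]; split_ifs <;> norm_num
  obtain ⟨e, he⟩ := hA
  have hle : w e ≤ w e - ε * indVec A e :=
    hw.le_of_le hmem (sub_le_self w (smul_nonneg hε.le hindVec)) e
  simp only [indVec, he, if_true] at hle
  linarith

lemma isMaxWeightMatching_filter_pos {M : Finset (Sym2 V)} (hw : w ∈ separatingWeights G x)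
    (hM : IsMatching' G M) (htight : w ⬝ᵥ indVec M + 1 = w ⬝ᵥ x) :
    IsMaxWeightMatching (positivePart G w) w (M.filter (0 < w ·)) := by
  have hM' := hM.subset (filter_subset (0 < w ·) M)
  refine ⟨⟨fun e he => ?_, hM'.2⟩, fun N hN => ?_⟩
  · exact mem_edgeSet_positivePart.2 ⟨hM'.1 he, (mem_filter.1 he).2⟩
  · have hNG : IsMatching' G N := ⟨fun e he => (mem_edgeSet_positivePart.1 (hN.1 he)).1, hN.2⟩
    have hle := hw.2 N hNG
    rw [← posPart_dotProduct_indVec, posPart_of_nonneg hw.1]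
    linarith

lemma exists_isMaxWeightMatching_card_lt (hx0 : 0 ≤ x)
    (hw : Minimal (· ∈ separatingWeights G x) w) {A : Finset (Sym2 V)} {e : Sym2 V} (heA : e ∈ A)
    (he : e ∈ (positivePart G w).edgeSet) :
    ∃ M, IsMaxWeightMatching (positivePart G w) w M ∧ #(M ∩ A) < ∑ e ∈ A, x e := by
  obtain ⟨M, hM, htight, hlt⟩ := exists_tight_matching_of_minimal hw
    (A := A.filter (0 < w ·)) ⟨e, by simp [heA, (mem_edgeSet_positivePart.1 he).2]⟩
    fun e he => (mem_filter.1 he).2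
  refine ⟨_, isMaxWeightMatching_filter_pos hw.prop hM htight, ?_⟩
  rw [dotProduct_comm _ x, dotProduct_indVec, dotProduct_indVec] at hlt
  calc (#(M.filter (0 < w ·) ∩ A) : ℝ) = ∑ e ∈ M, indVec (A.filter (0 < w ·)) e := by
        simp only [indVec, sum_boole]
        congr 2
        grind
    _ < ∑ e ∈ A with 0 < w e, x e := hlt
    _ ≤ ∑ e ∈ A, x e := sum_le_sum_of_subset_of_nonneg (filter_subset _ _) fun e _ _ => hx0 e

lemma exists_isMaxWeightMatching_misses (hx0 : 0 ≤ x) (hdeg : ∀ v, ∑ e with v ∈ e, x e ≤ 1)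
    (hw : Minimal (· ∈ separatingWeights G x) w) {e : Sym2 V}
    (he : e ∈ (positivePart G w).edgeSet) (t : V) :
    ∃ M, IsMaxWeightMatching (positivePart G w) w M ∧ Misses M t := by
  by_cases ht : ∃ f ∈ (positivePart G w).edgeSet, t ∈ f
  · obtain ⟨f, hf, htf⟩ := ht
    obtain ⟨M, hM, hlt⟩ := exists_isMaxWeightMatching_card_lt hx0 hw
      (A := {e | t ∈ e}) (by simpa using htf) hf
    have hcard : #(M ∩ ({e | t ∈ e} : Finset (Sym2 V))) < 1 := by
      exact_mod_cast hlt.trans_le (hdeg t)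
    rw [Nat.lt_one_iff, card_eq_zero, ← disjoint_iff_inter_eq_empty, disjoint_left] at hcard
    exact ⟨M, hM, fun f hf => by simpa using hcard hf⟩
  · obtain ⟨M, hM, -⟩ := exists_isMaxWeightMatching_card_lt hx0 hw (mem_univ e) he
    exact ⟨M, hM, fun f hf htf => ht ⟨f, hM.isMatching.1 hf, htf⟩⟩

lemma exists_mem_edgeSet_positivePart (hx0 : 0 ≤ x) (hxG : ∀ e ∉ G.edgeSet, x e = 0)
    (hw : w ∈ separatingWeights G x) : ∃ e, e ∈ (positivePart G w).edgeSet := by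
  have hpos : 0 < w ⬝ᵥ x := by
    have := hw.2 ∅ ⟨by simp, by simp⟩
    simp only [dotProduct_indVec, sum_empty] at this
    linarith
  obtain ⟨e, -, he⟩ := exists_lt_of_sum_lt (f := fun _ => (0 : ℝ))
    (by simpa [dotProduct] using hpos)
  refine ⟨e, mem_edgeSet_positivePart.2 ⟨?_, pos_of_mul_pos_left he (hx0 e)⟩⟩
  contrapose! he
  simp [hxG e he]

theorem mem_matchingPolytope (hx0 : 0 ≤ x) (hxG : ∀ e ∉ G.edgeSet, x e = 0)
    (hdeg : ∀ v, ∑ e with v ∈ e, x e ≤ 1)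
    (hodd : ∀ U : Finset V, Odd #U → ∑ e ∈ U.sym2, x e ≤ (#U - 1) / 2) :
    x ∈ matchingPolytope G := by
  by_contra hx
  obtain ⟨w, hw⟩ := exists_minimal_separatingWeights hx0 hx
  obtain ⟨e, he⟩ := exists_mem_edgeSet_positivePart hx0 hxG hw.prop
  have hmiss := exists_isMaxWeightMatching_misses hx0 hdeg hw he
  have hpos : ∀ f ∈ (positivePart G w).edgeSet, 0 < w f := fun f hf =>
    (mem_edgeSet_positivePart.1 hf).2
  obtain ⟨u, v⟩ := e
  let K := (positivePart G w).connectedComponentMk u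
  have heK : s(u, v) ∈ K.supp.toFinset.sym2 := mk_mem_sym2_iff.2
    ⟨Set.mem_toFinset.2 rfl, Set.mem_toFinset.2 (K.mem_supp_of_adj_mem_supp rfl he)⟩
  obtain ⟨M, hM, hlt⟩ := exists_isMaxWeightMatching_card_lt hx0 hw heK he
  have hsum := hodd _ (IsMaxWeightMatching.odd_card_supp hpos hmiss K)
  have hcard : (#K.supp.toFinset : ℝ) ≤ 2 * #(M ∩ K.supp.toFinset.sym2) + 1 := by
    exact_mod_cast hM.card_supp_le hpos hmiss K
  linarith

end Edmonds

section Forest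

lemma card_edgeFinset_lt_of_isAcyclic {V : Type*} [Fintype V] [Nonempty V] {F : SimpleGraph V}
    [Fintype F.edgeSet] (hF : F.IsAcyclic) : #F.edgeFinset < Fintype.card V := by
  obtain ⟨K, hFK, -, hK⟩ :=
    SimpleGraph.connected_top.exists_isTree_le_of_le_of_isAcyclic le_top hF
  rw [← hK.card_edgeFinset, Nat.lt_succ_iff]
  exact card_le_card (SimpleGraph.edgeFinset_mono hFK)

variable {V : Type*} [DecidableEq V]

lemma card_inter_sym2_lt_of_isAcyclic {F : SimpleGraph V} (hF : F.IsAcyclic)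
    {A : Finset (Sym2 V)} (hA : (A : Set (Sym2 V)) ⊆ F.edgeSet) {U : Finset V} (hU : U.Nonempty) :
    #(A ∩ U.sym2) < #U := by
  have : Nonempty (U : Set V) := hU.to_subtype
  have hsub : A ∩ U.sym2 ⊆ (F.induce (U : Set V)).edgeFinset.image (Sym2.map (↑)) := by
    rintro ⟨u, v⟩ he
    obtain ⟨heA, heU⟩ := mem_inter.1 he
    obtain ⟨hu, hv⟩ := mk_mem_sym2_iff.1 heU
    exact mem_image.2 ⟨s(⟨u, hu⟩, ⟨v, hv⟩), SimpleGraph.mem_edgeFinset.2 (hA heA), rfl⟩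
  calc #(A ∩ U.sym2) ≤ #(F.induce (U : Set V)).edgeFinset :=
        (card_le_card hsub).trans card_image_le
    _ < Fintype.card (U : Set V) := card_edgeFinset_lt_of_isAcyclic (hF.induce _)
    _ = #U := by simp

lemma IsSpanningTree.card_inter_sym2_lt {G : SimpleGraph V} {T : Finset (Sym2 V)}
    (hT : IsSpanningTree G T) {U : Finset V} (hU : U.Nonempty) : #(T ∩ U.sym2) < #U := by
  refine card_inter_sym2_lt_of_isAcyclic hT.2.isAcyclic (fun e he => ?_) hU
  rw [SimpleGraph.edgeSet_fromEdgeSet]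
  exact ⟨he, G.not_isDiag_of_mem_edgeSet (hT.1 he)⟩

end Forest

section SpanningTreePolytope

lemma dotProduct_le_of_mem_convexHull {κ : Type*} [Fintype κ] {s : Set (κ → ℝ)} {a x : κ → ℝ}
    {r : ℝ} (ha : ∀ y ∈ s, a ⬝ᵥ y ≤ r) (hx : x ∈ convexHull ℝ s) : a ⬝ᵥ x ≤ r :=
  convexHull_min (t := {y | a ⬝ᵥ y ≤ r}) ha
    (convex_halfSpace_le (dotProductEquiv ℝ κ a).isLinear r) hx

variable {V : Type*} [Fintype V] {G : SimpleGraph V}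

lemma mem_spanningTrees {T : Finset (Sym2 V)} : T ∈ spanningTrees G ↔ IsSpanningTree G T := by
  simp [spanningTrees]

lemma spanningTrees_nonempty (hG : G.Connected) : (spanningTrees G).Nonempty := by
  obtain ⟨F, hFG, hF⟩ := hG.exists_isTree_le
  refine ⟨F.edgeFinset, mem_spanningTrees.2 ⟨?_, ?_⟩⟩
  · simpa using hFG
  · simpa using hF

variable [DecidableEq V]

lemma indVec_dotProduct_indVec (A B : Finset (Sym2 V)) :
    indVec A ⬝ᵥ indVec B = #(B ∩ A) := by
  simp [dotProduct_indVec, indVec]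

lemma stPolytope_eq_convexHull_range (G : SimpleGraph V) :
    stPolytope G = convexHull ℝ (Set.range fun T : spanningTrees G => indVec T.1) := by
  rw [stPolytope]
  congr 1
  ext x
  simp [eq_comm]

variable {x : Sym2 V → ℝ}

lemma sum_le_of_mem_stPolytope {A : Finset (Sym2 V)} {r : ℝ}
    (hA : ∀ T, IsSpanningTree G T → #(T ∩ A) ≤ r) (hx : x ∈ stPolytope G) :
    ∑ e ∈ A, x e ≤ r := by
  rw [← dotProduct_indVec, dotProduct_comm]
  refine dotProduct_le_of_mem_convexHull ?_ hx
  rintro _ ⟨T, hT, rfl⟩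
  rw [indVec_dotProduct_indVec]
  exact hA T (mem_spanningTrees.1 hT)

lemma nonneg_of_mem_stPolytope (hx : x ∈ stPolytope G) : 0 ≤ x := by
  refine convexHull_min (t := Set.Ici 0) ?_ (convex_Ici 0) hx
  rintro _ ⟨T, -, rfl⟩ e
  simp only [indVec]
  split_ifs <;> norm_num

lemma eq_zero_of_mem_stPolytope (hx : x ∈ stPolytope G) {e : Sym2 V} (he : e ∉ G.edgeSet) :
    x e = 0 := by
  refine le_antisymm ?_ (nonneg_of_mem_stPolytope hx e)
  rw [← sum_singleton x e]
  refine sum_le_of_mem_stPolytope (fun T hT => ?_) hx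
  rw [inter_singleton_of_notMem fun heT => he (hT.1 heT)]
  simp

lemma sum_sym2_le_of_mem_stPolytope (hx : x ∈ stPolytope G) {U : Finset V} (hU : U.Nonempty) :
    ∑ e ∈ U.sym2, x e ≤ #U - 1 := by
  refine sum_le_of_mem_stPolytope (fun T hT => ?_) hx
  rw [le_sub_iff_add_le]
  exact_mod_cast hT.card_inter_sym2_lt hU

lemma sum_filter_mem_le_one_of_mem_matchingPolytope (hx : x ∈ matchingPolytope G) (v : V) :
    ∑ e with v ∈ e, x e ≤ 1 := by
  rw [← dotProduct_indVec, dotProduct_comm]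
  refine dotProduct_le_of_mem_convexHull ?_ hx
  rintro _ ⟨M, hM, rfl⟩
  rw [indVec_dotProduct_indVec, inter_filter, inter_univ]
  exact_mod_cast hM.2 v

open scoped Pointwise in
theorem mem_two_smul_matchingPolytope_iff (hx : x ∈ stPolytope G) :
    x ∈ (2 : ℝ) • matchingPolytope G ↔ ∀ v, ∑ e with v ∈ e, x e ≤ 2 := by
  constructor
  · rintro ⟨m, hm, rfl⟩ v
    have hmv := sum_filter_mem_le_one_of_mem_matchingPolytope hm v
    simp only [Pi.smul_apply, smul_eq_mul, ← mul_sum]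
    linarith
  · intro hdeg
    rw [Set.mem_smul_set_iff_inv_smul_mem₀ two_ne_zero]
    refine mem_matchingPolytope (smul_nonneg (by norm_num) (nonneg_of_mem_stPolytope hx))
      (fun e he => by simp [eq_zero_of_mem_stPolytope hx he]) (fun v => ?_) fun U hU => ?_
    · simp only [Pi.smul_apply, smul_eq_mul, ← mul_sum]
      linarith [hdeg v]
    · have hsum := sum_sym2_le_of_mem_stPolytope hx (card_pos.1 hU.pos)
      simp only [Pi.smul_apply, smul_eq_mul, ← mul_sum]
      linarith

end SpanningTreePolytope

section RelativeResistance

variable {V : Type*} [Fintype V] {G : SimpleGraph V} {c : Sym2 V → ℝ}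

lemma sum_prod_spanningTrees_pos (hG : G.Connected) (hc : ∀ e ∈ G.edgeSet, 0 < c e) :
    0 < ∑ T : spanningTrees G, ∏ t ∈ T.1, c t :=
  have := (spanningTrees_nonempty hG).to_subtype
  sum_pos (fun T _ => prod_pos fun t ht => hc t ((mem_spanningTrees.1 T.2).1 ht)) univ_nonempty

variable [DecidableEq V]

lemma sum_neighborFinset_eq_sum_filter_mem {f : Sym2 V → ℝ} (hf : ∀ e ∉ G.edgeSet, f e = 0)
    (v : V) [Fintype (G.neighborSet v)] :
    ∑ u ∈ G.neighborFinset v, f s(u, v) = ∑ e with v ∈ e, f e := by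
  refine sum_of_injOn (fun u => s(u, v)) (fun u _ u' _ h => Sym2.congr_left.1 h)
    (fun u _ => by simp) (fun e he hnot => hf e fun heG => hnot ?_) fun _ _ => rfl
  obtain ⟨u, rfl⟩ := Sym2.mem_iff_exists.1 (mem_filter.1 he).2
  exact ⟨u, by simpa using heG, Sym2.eq_swap⟩

lemma relRes_eq_zero {e : Sym2 V} (he : e ∉ G.edgeSet) : relRes G c e = 0 := by
  rw [relRes, filter_eq_empty_iff.2 fun T hT (heT : e ∈ T) =>
      he ((mem_spanningTrees.1 hT).1 heT),
    sum_empty, zero_div]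

lemma curv_nonneg_iff {v : V} : 0 ≤ curv G c v ↔ ∑ e with v ∈ e, relRes G c e ≤ 2 := by
  rw [curv, sum_neighborFinset_eq_sum_filter_mem fun _ => relRes_eq_zero]
  constructor <;> intro h <;> linarith

lemma relRes_eq_inv_smul_sum (G : SimpleGraph V) (c : Sym2 V → ℝ) :
    relRes G c = (∑ T : spanningTrees G, ∏ t ∈ T.1, c t)⁻¹ •
      ∑ T : spanningTrees G, (∏ t ∈ T.1, c t) • indVec T.1 := by
  rw [sum_coe_sort (spanningTrees G) fun T => ∏ t ∈ T, c t,
    sum_coe_sort (spanningTrees G) fun T => (∏ t ∈ T, c t) • indVec T]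
  ext e
  simp [relRes, indVec, sum_filter, div_eq_inv_mul]

lemma exp_indVec_dotProduct (T : Finset (Sym2 V)) (θ : Sym2 V → ℝ) :
    Real.exp (indVec T ⬝ᵥ θ) = ∏ t ∈ T, Real.exp (θ t) := by
  rw [dotProduct_comm, dotProduct_indVec, Real.exp_sum]

theorem intrinsicInterior_stPolytope (hG : G.Connected) :
    intrinsicInterior ℝ (stPolytope G) = relRes G '' {c | ∀ e ∈ G.edgeSet, 0 < c e} := by
  rw [stPolytope_eq_convexHull_range, intrinsicInterior_convexHull_range]
  apply Set.Subset.antisymm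
  · rintro _ ⟨w, ⟨hw, hw1⟩, rfl⟩
    obtain ⟨θ, hθ⟩ := exists_sum_exp_dotProduct_smul_eq (fun T : spanningTrees G => indVec T.1)
      hw hw1
    simp only [exp_indVec_dotProduct] at hθ
    have hpos : ∀ e ∈ G.edgeSet, 0 < Real.exp (θ e) := fun e _ => Real.exp_pos _
    refine ⟨fun e => Real.exp (θ e), hpos, ?_⟩
    rw [relRes_eq_inv_smul_sum, hθ, inv_smul_smul₀ (sum_prod_spanningTrees_pos hG hpos).ne',
      Fintype.linearCombination_apply]
  · rintro _ ⟨c, hc, rfl⟩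
    have hZ := sum_prod_spanningTrees_pos hG hc
    refine ⟨fun T => (∑ T : spanningTrees G, ∏ t ∈ T.1, c t)⁻¹ * ∏ t ∈ T.1, c t,
      ⟨fun T => ?_, ?_⟩, ?_⟩
    · exact mul_pos (inv_pos.2 hZ) (prod_pos fun t ht => hc t ((mem_spanningTrees.1 T.2).1 ht))
    · rw [← mul_sum, inv_mul_cancel₀ hZ.ne']
    · simp only [relRes_eq_inv_smul_sum, Fintype.linearCombination_apply, smul_sum, mul_smul]

end RelativeResistance

end RCurv

open scoped Pointwise in
open RCurv in
/-- A graph is resistance nonnegative iff the relative interior of its spanning tree polytope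
intersects its twice-dilated matching polytope. -/
theorem isRN_iff_inter_matchingPolytope {V : Type*} [Fintype V] [DecidableEq V]
    (G : SimpleGraph V) (hG : G.Connected) :
    IsRN G ↔
      (intrinsicInterior ℝ (stPolytope G) ∩ (2 : ℝ) • matchingPolytope G).Nonempty := by
  have hmem : ∀ c ∈ {c | ∀ e ∈ G.edgeSet, 0 < c e},
      (relRes G c ∈ (2 : ℝ) • matchingPolytope G ↔ ∀ v, 0 ≤ curv G c v) := fun c hc => by
    have hrc : relRes G c ∈ intrinsicInterior ℝ (stPolytope G) :=
      intrinsicInterior_stPolytope hG ▸ Set.mem_image_of_mem _ hc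
    simp only [mem_two_smul_matchingPolytope_iff (intrinsicInterior_subset hrc), curv_nonneg_iff]
  rw [intrinsicInterior_stPolytope hG]
  constructor
  · rintro ⟨c, hc, hcurv⟩
    exact ⟨relRes G c, Set.mem_image_of_mem _ hc, (hmem c hc).2 hcurv⟩
  · rintro ⟨_, ⟨c, hc, rfl⟩, hrc⟩
    exact ⟨c, hc, (hmem c hc).1 hrc⟩
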